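/- Let d ≥ 1, let x, y ∈ ℝ^d be unit vectors, let D ∈ ℕ⁺ and δ > 0. Let μ be the D-fold product of the standard Gaussian measure on ℝ^d, so a sample from μ is a tuple (Z₁, …, Z_D) of independent standard Gaussian vectors in ℝ^d. Then μ({(Z₁,…,Z_D) : |D^{−1} Σ_{i=1}^{D} sign(⟨x, Z_i⟩)·sign(⟨y, Z_i⟩) − (2/π)·arcsin(⟨x, y⟩)| > δ}) ≤ 2·exp(−D δ² / 2). -/

import Mathlib

/-!
The summands `sgn ⟪x, Zᵢ⟫ * sgn ⟪y, Zᵢ⟫` are i.i.d. with values in `[-1, 1]`, so the bound is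
Hoeffding's inequality applied to both tails (`hoeffding_two_sided`), once their mean is known to be
`(2 / π) * arcsin ⟪x, y⟫` (`integral_sgn_mul_sgn`).

For the mean, put `φ = arcsin ⟪x, y⟫`. A pair of linear forms in independent standard Gaussians has
a law depending only on the Gram matrix of the coefficient vectors (`map_pair_eq`, by characteristic
functions), so `(⟪x, Z⟫, ⟪y, Z⟫)` has the law of `(G₁, sin φ * G₁ + cos φ * G₂)` with `G₁, G₂`
independent standard Gaussians. In polar coordinates `(G₁, G₂) = r (cos θ, sin θ)` the second form
is `r * sin (θ + φ)`, so the product of signs depends on `θ` only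
(`integral_gaussian_prod_angular`), and its integral over a full turn is `4 * φ`
(`integral_angle`). Dividing by `2 * π` gives the mean.
-/

open MeasureTheory ProbabilityTheory RealInnerProductSpace

/-- `sign(t) = 1` if `t ≥ 0` and `−1` if `t < 0`. -/
noncomputable def sgn (t : ℝ) : ℝ := if 0 ≤ t then 1 else -1

lemma sgn_of_nonneg {t : ℝ} (h : 0 ≤ t) : sgn t = 1 := if_pos h

lemma sgn_of_neg {t : ℝ} (h : t < 0) : sgn t = -1 := if_neg (not_le.2 h)

lemma sgn_pos_mul {r : ℝ} (hr : 0 < r) (t : ℝ) : sgn (r * t) = sgn t := by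
  simp only [sgn, mul_nonneg_iff_of_pos_left hr]

lemma measurable_sgn : Measurable sgn :=
  Measurable.ite measurableSet_Ici measurable_const measurable_const

lemma sgn_mul_sgn_mem_Icc (s t : ℝ) : sgn s * sgn t ∈ Set.Icc (-1 : ℝ) 1 := by
  unfold sgn; split_ifs <;> norm_num

lemma intervalIntegral_of_eqOn_Ioo {g : ℝ → ℝ} {a b c : ℝ} (hab : a ≤ b)
    (h : ∀ t ∈ Set.Ioo a b, g t = c) :
    IntervalIntegrable g volume a b ∧ ∫ t in a..b, g t = (b - a) * c := by
  have h' : Set.EqOn (fun _ => c) g (Set.uIoo a b) := by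
    intro t ht
    rw [Set.uIoo_of_le hab] at ht
    exact (h t ht).symm
  refine ⟨(intervalIntegrable_const (c := c)).congr_uIoo h', ?_⟩
  rw [← intervalIntegral.integral_congr_uIoo h']
  simp

/-- The angular integral behind the arcsine: `sgn (cos θ)` and `sgn (sin (θ + φ))` agree on
arcs of total length `π + 2 * φ` and disagree on arcs of total length `π - 2 * φ`. -/
lemma integral_angle {φ : ℝ} (h1 : -(Real.pi / 2) ≤ φ) (h2 : φ ≤ Real.pi / 2) :
    ∫ θ in Set.Ioo (-Real.pi) Real.pi, sgn (Real.cos θ) * sgn (Real.sin (θ + φ)) = 4 * φ := by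
  set g : ℝ → ℝ := fun θ => sgn (Real.cos θ) * sgn (Real.sin (θ + φ)) with hg
  have hπ := Real.pi_pos
  have hper : Function.Periodic g (2 * Real.pi) := by
    intro θ
    simp only [hg, Real.cos_add_two_pi, add_right_comm θ (2 * Real.pi) φ, Real.sin_add_two_pi]
  -- On the period starting at `-π/2` the sign changes occur at `-φ`, `π/2` and `π - φ`, in this
  -- order whatever the sign of `φ`.
  have hshift := hper.intervalIntegral_add_eq (-Real.pi) (-(Real.pi / 2))
  obtain ⟨i1, e1⟩ := intervalIntegral_of_eqOn_Ioo (g := g) (a := -(Real.pi / 2)) (b := -φ)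
    (c := -1) (by linarith) (by
      rintro θ ⟨ha, hb⟩
      have hc := Real.cos_nonneg_of_neg_pi_div_two_le_of_le ha.le (by linarith)
      have hs := Real.sin_neg_of_neg_of_neg_pi_lt (x := θ + φ) (by linarith) (by linarith)
      simp [hg, sgn_of_nonneg hc, sgn_of_neg hs])
  obtain ⟨i2, e2⟩ := intervalIntegral_of_eqOn_Ioo (g := g) (a := -φ) (b := Real.pi / 2)
    (c := 1) (by linarith) (by
      rintro θ ⟨ha, hb⟩
      have hc := Real.cos_nonneg_of_neg_pi_div_two_le_of_le (x := θ) (by linarith) (by linarith)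
      have hs := Real.sin_nonneg_of_nonneg_of_le_pi (x := θ + φ) (by linarith) (by linarith)
      simp [hg, sgn_of_nonneg hc, sgn_of_nonneg hs])
  obtain ⟨i3, e3⟩ := intervalIntegral_of_eqOn_Ioo (g := g) (a := Real.pi / 2)
    (b := Real.pi - φ) (c := -1) (by linarith) (by
      rintro θ ⟨ha, hb⟩
      have hc := Real.cos_neg_of_pi_div_two_lt_of_lt (x := θ) (by linarith) (by linarith)
      have hs := Real.sin_nonneg_of_nonneg_of_le_pi (x := θ + φ) (by linarith) (by linarith)
      simp [hg, sgn_of_neg hc, sgn_of_nonneg hs])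
  obtain ⟨i4, e4⟩ := intervalIntegral_of_eqOn_Ioo (g := g) (a := Real.pi - φ)
    (b := -(Real.pi / 2) + 2 * Real.pi) (c := 1) (by linarith) (by
      rintro θ ⟨ha, hb⟩
      have hc := Real.cos_neg_of_pi_div_two_lt_of_lt (x := θ) (by linarith) (by linarith)
      have hs := Real.sin_neg_of_neg_of_neg_pi_lt (x := θ + φ - 2 * Real.pi)
        (by linarith) (by linarith)
      rw [Real.sin_sub_two_pi] at hs
      simp [hg, sgn_of_neg hc, sgn_of_neg hs])
  rw [← integral_Ioc_eq_integral_Ioo, ← intervalIntegral.integral_of_le (by linarith)]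
  rw [show -Real.pi + 2 * Real.pi = Real.pi by ring] at hshift
  rw [hshift, ← intervalIntegral.integral_add_adjacent_intervals i1 ((i2.trans i3).trans i4),
    ← intervalIntegral.integral_add_adjacent_intervals (i2.trans i3) i4,
    ← intervalIntegral.integral_add_adjacent_intervals i2 i3, e1, e2, e3, e4]
  ring

lemma integral_gaussian_prod (f : ℝ × ℝ → ℝ) :
    ∫ p, f p ∂((gaussianReal 0 1).prod (gaussianReal 0 1)) =
      ∫ p : ℝ × ℝ, (2 * Real.pi)⁻¹ * Real.exp (-(p.1 ^ 2 + p.2 ^ 2) / 2) * f p := by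
  rw [gaussianReal_of_var_ne_zero 0 one_ne_zero,
    prod_withDensity (measurable_gaussianPDF _ _) (measurable_gaussianPDF _ _),
    integral_withDensity_eq_integral_toReal_smul (by fun_prop)
      (ae_of_all _ fun p => ENNReal.mul_lt_top gaussianPDF_lt_top gaussianPDF_lt_top)]
  refine integral_congr_ae (ae_of_all _ fun p => ?_)
  simp only [ENNReal.toReal_mul, toReal_gaussianPDF, gaussianPDFReal, smul_eq_mul, sub_zero,
    NNReal.coe_one, mul_one]
  rw [mul_mul_mul_comm, ← mul_inv, Real.mul_self_sqrt (by positivity), ← Real.exp_add]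
  congr 3
  ring

/-- A positively homogeneous function of degree zero integrates, against the standard Gaussian
measure of the plane, to its mean over the angle. -/
lemma integral_gaussian_prod_angular (f : ℝ × ℝ → ℝ) (u : ℝ → ℝ)
    (hf : ∀ r > 0, ∀ θ, f (r * Real.cos θ, r * Real.sin θ) = u θ) :
    ∫ p, f p ∂((gaussianReal 0 1).prod (gaussianReal 0 1)) =
      (2 * Real.pi)⁻¹ * ∫ θ in Set.Ioo (-Real.pi) Real.pi, u θ := by
  -- The radial factor is common to all `f`; it is pinned down by the case `f = 1`.
  have key : ∀ (f : ℝ × ℝ → ℝ) (u : ℝ → ℝ),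
      (∀ r > 0, ∀ θ, f (r * Real.cos θ, r * Real.sin θ) = u θ) →
      ∫ p, f p ∂((gaussianReal 0 1).prod (gaussianReal 0 1)) =
        (∫ r in Set.Ioi (0 : ℝ), r * ((2 * Real.pi)⁻¹ * Real.exp (-r ^ 2 / 2))) *
          ∫ θ in Set.Ioo (-Real.pi) Real.pi, u θ := by
    intro f u hf
    rw [integral_gaussian_prod, ← integral_comp_polarCoord_symm, ← setIntegral_prod_mul]
    refine setIntegral_congr_fun polarCoord.open_target.measurableSet ?_
    rintro ⟨r, θ⟩ ⟨hr, -⟩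
    have hr' : 0 < r := hr
    simp only [polarCoord_symm_apply, smul_eq_mul, hf r hr']
    rw [show (r * Real.cos θ) ^ 2 + (r * Real.sin θ) ^ 2 = r ^ 2 by
      rw [mul_pow, mul_pow, ← mul_add, Real.cos_sq_add_sin_sq, mul_one]]
    ring
  have h1 := key (fun _ => 1) (fun _ => 1) (fun _ _ _ => rfl)
  have hπ := Real.pi_pos
  simp only [integral_const, probReal_univ, smul_eq_mul, mul_one, measureReal_restrict_apply_univ,
    Real.volume_real_Ioo, sub_neg_eq_add, max_eq_left (add_pos hπ hπ).le] at h1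
  rw [key f u hf, eq_inv_of_mul_eq_one_left h1.symm, two_mul]

/-- The characteristic function of a pair of linear forms in independent standard Gaussians
depends only on the Gram matrix of their coefficient vectors. -/
lemma charFunDual_pair {ι : Type*} [Fintype ι] (a b : ι → ℝ) (L : StrongDual ℝ (ℝ × ℝ)) :
    charFunDual ((Measure.pi fun _ : ι => gaussianReal 0 1).map
      fun z => (∑ j, a j * z j, ∑ j, b j * z j)) L =
    Complex.exp (-((L (1, 0) ^ 2 * ∑ j, a j ^ 2 + 2 * (L (1, 0) * L (0, 1)) * ∑ j, a j * b j +
      L (0, 1) ^ 2 * ∑ j, b j ^ 2 : ℝ) : ℂ) / 2) := by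
  set s := L (1, 0)
  set t := L (0, 1)
  have hL : ∀ p : ℝ × ℝ, L p = p.1 * s + p.2 * t := by
    intro p
    have : p = p.1 • ((1, 0) : ℝ × ℝ) + p.2 • ((0, 1) : ℝ × ℝ) := by ext <;> simp
    conv_lhs => rw [this, map_add, map_smul, map_smul]
    rfl
  rw [charFunDual_apply, integral_map (by fun_prop) (by fun_prop)]
  have hexp : ∀ z : ι → ℝ,
      Complex.exp ((L (∑ j, a j * z j, ∑ j, b j * z j) : ℂ) * Complex.I) =
        ∏ j, Complex.exp (((s * a j + t * b j : ℝ) : ℂ) * (z j : ℂ) * Complex.I) := by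
    intro z
    rw [← Complex.exp_sum, hL, ← Finset.sum_mul]
    congr 2
    push_cast
    rw [Finset.sum_mul, Finset.sum_mul, ← Finset.sum_add_distrib]
    exact Finset.sum_congr rfl fun j _ => by ring
  simp_rw [hexp]
  rw [integral_fintype_prod_eq_prod (𝕜 := ℂ) (fun j (w : ℝ) =>
    Complex.exp (((s * a j + t * b j : ℝ) : ℂ) * (w : ℂ) * Complex.I))]
  simp_rw [← charFun_apply_real, charFun_gaussianReal]
  rw [← Complex.exp_sum]
  congr 1
  push_cast
  simp only [Finset.mul_sum, ← Finset.sum_add_distrib, ← Finset.sum_neg_distrib, Finset.sum_div]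
  exact Finset.sum_congr rfl fun j _ => by ring

lemma map_pair_eq {ι κ : Type*} [Fintype ι] [Fintype κ] (a b : ι → ℝ) (a' b' : κ → ℝ)
    (haa : ∑ j, a j ^ 2 = ∑ j, a' j ^ 2) (hab : ∑ j, a j * b j = ∑ j, a' j * b' j)
    (hbb : ∑ j, b j ^ 2 = ∑ j, b' j ^ 2) :
    (Measure.pi fun _ : ι => gaussianReal 0 1).map
        (fun z => (∑ j, a j * z j, ∑ j, b j * z j)) =
      (Measure.pi fun _ : κ => gaussianReal 0 1).map
        (fun z => (∑ j, a' j * z j, ∑ j, b' j * z j)) := by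
  have : IsProbabilityMeasure ((Measure.pi fun _ : ι => gaussianReal 0 1).map
        (fun z => (∑ j, a j * z j, ∑ j, b j * z j))) :=
    Measure.isProbabilityMeasure_map (by fun_prop)
  have : IsProbabilityMeasure ((Measure.pi fun _ : κ => gaussianReal 0 1).map
        (fun z => (∑ j, a' j * z j, ∑ j, b' j * z j))) :=
    Measure.isProbabilityMeasure_map (by fun_prop)
  refine Measure.ext_of_charFunDual ?_
  ext L
  rw [charFunDual_pair, charFunDual_pair, haa, hab, hbb]

/-- Sheppard's formula (also known as Grothendieck's identity). -/
lemma integral_sgn_mul_sgn {d : ℕ} (x y : EuclideanSpace ℝ (Fin d)) (hx : ‖x‖ = 1)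
    (hy : ‖y‖ = 1) :
    ∫ z : Fin d → ℝ, sgn (∑ j, x j * z j) * sgn (∑ j, y j * z j)
      ∂(Measure.pi fun _ : Fin d => gaussianReal 0 1) =
      (2 / Real.pi) * Real.arcsin ⟪x, y⟫ := by
  set φ := Real.arcsin ⟪x, y⟫ with hφ
  have hρ : Real.sin φ = ⟪x, y⟫ := by
    have h := abs_le.1 (abs_real_inner_le_norm x y)
    rw [hx, hy, mul_one] at h
    exact Real.sin_arcsin h.1 h.2
  have hmeas : Measurable fun p : ℝ × ℝ => sgn p.1 * sgn p.2 :=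
    (measurable_sgn.comp measurable_fst).mul (measurable_sgn.comp measurable_snd)
  -- `(⟪x, Z⟫, ⟪y, Z⟫)` has the law of `(G₁, sin φ * G₁ + cos φ * G₂)`. Comparing laws, rather than
  -- choosing a unit vector orthogonal to `x`, also covers `y = ± x` and dimension one.
  have hmap := map_pair_eq (fun j => x j) (fun j => y j) ![1, 0] ![Real.sin φ, Real.cos φ]
    (by simp [← EuclideanSpace.real_norm_sq_eq, hx])
    (by simp [hρ, PiLp.inner_apply, mul_comm])
    (by simp [← EuclideanSpace.real_norm_sq_eq, hy])
  have e1 := integral_map (μ := Measure.pi fun _ : Fin d => gaussianReal 0 1)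
    (φ := fun z => (∑ j, x j * z j, ∑ j, y j * z j)) (by fun_prop)
    hmeas.aestronglyMeasurable
  have e2 := integral_map (μ := Measure.pi fun _ : Fin 2 => gaussianReal 0 1)
    (φ := fun z => (∑ j, (![1, 0] : Fin 2 → ℝ) j * z j,
      ∑ j, (![Real.sin φ, Real.cos φ] : Fin 2 → ℝ) j * z j)) (by fun_prop)
    hmeas.aestronglyMeasurable
  have e3 := (measurePreserving_finTwoArrow (gaussianReal 0 1)).integral_comp'
    (fun p : ℝ × ℝ => sgn p.1 * sgn (Real.sin φ * p.1 + Real.cos φ * p.2))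
  have e4 := integral_gaussian_prod_angular
    (fun p : ℝ × ℝ => sgn p.1 * sgn (Real.sin φ * p.1 + Real.cos φ * p.2))
    (fun θ => sgn (Real.cos θ) * sgn (Real.sin (θ + φ)))
    (fun r hr θ => by
      simp only
      rw [sgn_pos_mul hr, show Real.sin φ * (r * Real.cos θ) + Real.cos φ * (r * Real.sin θ) =
        r * Real.sin (θ + φ) by rw [Real.sin_add]; ring, sgn_pos_mul hr])
  rw [integral_angle (Real.neg_pi_div_two_le_arcsin _) (Real.arcsin_le_pi_div_two _)] at e4
  rw [← e1, hmap, e2]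
  simp only [Fin.sum_univ_two, Matrix.cons_val_zero, Matrix.cons_val_one, one_mul, zero_mul,
    add_zero]
  refine (e3.trans e4).trans ?_
  have := Real.pi_ne_zero
  rw [← hφ]
  field_simp
  norm_num

/-- Two-sided Hoeffding inequality for the empirical mean of i.i.d. `[-1, 1]`-valued variables. -/
lemma hoeffding_two_sided {Ω : Type*} [MeasurableSpace Ω] (ν : Measure Ω)
    [IsProbabilityMeasure ν] (f : Ω → ℝ) (hf : Measurable f)
    (hb : ∀ ω, f ω ∈ Set.Icc (-1 : ℝ) 1) (D : ℕ) (hD : 1 ≤ D) (δ : ℝ) (hδ : 0 < δ) :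
    (Measure.pi fun _ : Fin D => ν)
        {Z : Fin D → Ω | δ < |(D : ℝ)⁻¹ * ∑ i, f (Z i) - ∫ ω, f ω ∂ν|} ≤
      ENNReal.ofReal (2 * Real.exp (-(D : ℝ) * δ ^ 2 / 2)) := by
  set m := ∫ ω, f ω ∂ν with hm
  set P := Measure.pi fun _ : Fin D => ν
  have hD' : (0 : ℝ) < D := by exact_mod_cast hD
  have hsub : ∀ i : Fin D, HasSubgaussianMGF (fun Z : Fin D → Ω => f (Z i) - m) 1 P := by
    intro i
    have h := hasSubgaussianMGF_of_mem_Icc (μ := P) (X := fun Z => f (Z i)) (a := -1) (b := 1)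
      (hf.comp (measurable_pi_apply i)).aemeasurable (ae_of_all _ fun Z => hb _)
    have hmean : ∫ Z, f (Z i) ∂P = m :=
      (measurePreserving_eval (fun _ : Fin D => ν) i).hasLaw.integral_comp
        hf.aestronglyMeasurable
    have hc : (‖(1 : ℝ) - -1‖₊ / 2) ^ 2 = 1 := by
      ext; norm_num
    rwa [hmean, hc] at h
  have hind : iIndepFun (fun (i : Fin D) (Z : Fin D → Ω) => f (Z i) - m) P :=
    iIndepFun_pi (X := fun (_ : Fin D) ω => f ω - m) fun _ => (hf.sub_const m).aemeasurable
  have hind' : iIndepFun (fun (i : Fin D) (Z : Fin D → Ω) => -(f (Z i) - m)) P :=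
    iIndepFun_pi (X := fun (_ : Fin D) ω => -(f ω - m)) fun _ =>
      (hf.sub_const m).neg.aemeasurable
  have hε : (0 : ℝ) ≤ D * δ := by positivity
  have hexp : -((D : ℝ) * δ) ^ 2 / (2 * ∑ _i : Fin D, ((1 : NNReal) : ℝ)) =
      -(D : ℝ) * δ ^ 2 / 2 := by
    simp; field_simp
  have up := HasSubgaussianMGF.measure_sum_ge_le_of_iIndepFun hind (c := fun _ => 1)
    (s := Finset.univ) (fun i _ => hsub i) hε
  have lo := HasSubgaussianMGF.measure_sum_ge_le_of_iIndepFun hind' (c := fun _ => 1)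
    (s := Finset.univ) (fun i _ => (hsub i).neg) hε
  push_cast at up lo
  push_cast at hexp
  rw [hexp] at up lo
  rw [← ENNReal.ofReal_toReal (measure_ne_top P _)]
  refine ENNReal.ofReal_le_ofReal ?_
  rw [two_mul]
  refine le_trans ?_ ((measureReal_union_le _ _).trans (add_le_add up lo))
  refine measureReal_mono ?_
  intro Z hZ
  have hs : ∑ i, (f (Z i) - m) = D * ((D : ℝ)⁻¹ * ∑ i, f (Z i) - m) := by
    rw [Finset.sum_sub_distrib]
    simp
    field_simp
  simp only [Set.mem_union, Set.mem_ofPred_eq, Finset.sum_neg_distrib, hs] at hZ ⊢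
  rcases lt_abs.1 hZ with h | h
  · exact Or.inl (mul_le_mul_of_nonneg_left h.le hD'.le)
  · right
    rw [← mul_neg]
    exact mul_le_mul_of_nonneg_left h.le hD'.le

/-- Hoeffding bound: for unit vectors `x, y ∈ ℝ^d`, `D` independent standard Gaussian
vectors `Z₁, …, Z_D` in `ℝ^d`, and `δ > 0`,
`ℙ(|D⁻¹ Σᵢ sign(⟨x,Zᵢ⟩)·sign(⟨y,Zᵢ⟩) − (2/π)·arcsin(⟨x,y⟩)| > δ) ≤ 2·exp(−Dδ²/2)`. -/
theorem prob_sign_sum_deviation (d D : ℕ) (hd : 1 ≤ d) (hD : 1 ≤ D) (δ : ℝ) (hδ : 0 < δ)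
    (x y : EuclideanSpace ℝ (Fin d)) (hx : ‖x‖ = 1) (hy : ‖y‖ = 1) :
    (Measure.pi fun _ : Fin D => Measure.pi fun _ : Fin d => gaussianReal 0 1)
        {Z : Fin D → Fin d → ℝ |
          δ < |(D : ℝ)⁻¹ * ∑ i, sgn (∑ j, x j * Z i j) * sgn (∑ j, y j * Z i j) -
                (2 / Real.pi) * Real.arcsin ⟪x, y⟫|} ≤
      ENNReal.ofReal (2 * Real.exp (-(D : ℝ) * δ ^ 2 / 2)) := by
  rw [← integral_sgn_mul_sgn x y hx hy]
  exact hoeffding_two_sided (Measure.pi fun _ : Fin d => gaussianReal 0 1)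
    (fun z => sgn (∑ j, x j * z j) * sgn (∑ j, y j * z j))
    ((measurable_sgn.comp (by fun_prop)).mul (measurable_sgn.comp (by fun_prop)))
    (fun z => sgn_mul_sgn_mem_Icc _ _) D hD δ hδ
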